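/- Let d ≥ 1 and let μ, ν be Borel probability measures on ℝ^d with finite first moments (∫|x| dμ(x) < ∞ and ∫|y| dν(y) < ∞). Then the infimum over all convex 1-Lipschitz functions f : ℝ^d → ℝ of (∫ f dν − ∫ f dμ) is equal to the infimum over all Borel probability measures ρ on ℝ^d whose support is contained in the closed unit ball of (C(ν,ρ) − C(μ,ρ)). -/

import Mathlib

open MeasureTheory Metric RealInnerProductSpace

noncomputable section

/-- The set of couplings of two measures on `ℝ^d`. -/
def Couplings {d : ℕ} (α β : Measure (EuclideanSpace ℝ (Fin d))) :
    Set (Measure (EuclideanSpace ℝ (Fin d) × EuclideanSpace ℝ (Fin d))) :=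
  {π | π.map Prod.fst = α ∧ π.map Prod.snd = β}

/-- `C(α,β) = sup_{π ∈ Π(α,β)} ∫ ⟨x,y⟩ dπ`. -/
def OTcost {d : ℕ} (α β : Measure (EuclideanSpace ℝ (Fin d))) : ℝ :=
  sSup {r : ℝ | ∃ π ∈ Couplings α β, r = ∫ p, ⟪p.1, p.2⟫ ∂π}

section Duality

open Set Filter Topology CompactlySupported Pointwise

/-!
Kantorovich duality rewrites `C(ν, ρ)`, for `ρ` supported in the unit ball, as an infimum of
`∫ f dν + ∫ g dρ` over pairs with `⟪x, y⟫ ≤ f x + g y` for `y` in the ball. The conjugate of `g`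
over the ball is convex and 1-Lipschitz, lies below `f`, and still bounds `C(μ, ρ)`; this gives one
inequality. Conversely, for a convex 1-Lipschitz `f` let `T` be a measurable selection of
approximate subgradients with countable range. Then `ρ = T_* μ` lives in the unit ball, the graph of
`T` is a coupling of `μ` and `ρ` that is optimal up to `ε` with potentials `f` and its conjugate,
and the same pair of potentials bounds `C(ν, ρ)`.

For the duality, apply Hahn–Banach to the sublinear functional taking a function to the infimum of
its dual values. This gives a finitely additive coupling, which Riesz–Markov–Kakutani represents by
a measure; no mass escapes to infinity because the second factor is compact and the first marginal
is tight.
-/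

section HahnBanach

variable {V : Type*} [AddCommGroup V] [Module ℝ V]

theorem exists_linearMap_le_sublinear_eq {N : V → ℝ}
    (N_hom : ∀ c : ℝ, 0 < c → ∀ x, N (c • x) = c * N x)
    (N_add : ∀ x y, N (x + y) ≤ N x + N y) (e : V) :
    ∃ L : V →ₗ[ℝ] ℝ, (∀ x, L x ≤ N x) ∧ L e = N e := by
  have N_zero : N 0 = 0 := by linarith [N_hom 2 two_pos 0, congrArg N (smul_zero (A := V) (2 : ℝ))]
  have mul_le : ∀ t : ℝ, t * N e ≤ N (t • e) := fun t => by
    rcases lt_trichotomy t 0 with ht | rfl | ht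
    · have h := N_add (t • e) ((-t) • e)
      rw [← add_smul, add_neg_cancel, zero_smul, N_zero, N_hom (-t) (neg_pos.2 ht)] at h
      linarith
    · simp [N_zero]
    · exact (N_hom t ht e).ge
  have well_defined : ∀ t : ℝ, t • e = 0 → t • N e = 0 := fun t ht => by
    rcases smul_eq_zero.1 ht with rfl | rfl
    · exact zero_smul ℝ _
    · rw [N_zero, smul_zero]
  obtain ⟨L, L_eq, L_le⟩ := exists_extension_of_le_sublinear
    (LinearPMap.mkSpanSingleton' (σ := RingHom.id ℝ) e (N e) well_defined) N N_hom N_add (by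
      rintro ⟨_, hx⟩
      obtain ⟨t, rfl⟩ := Submodule.mem_span_singleton.1 hx
      rw [LinearPMap.mkSpanSingleton'_apply]
      exact mul_le t)
  exact ⟨L, L_le, (L_eq ⟨e, Submodule.mem_span_singleton_self e⟩).trans
    (LinearPMap.mkSpanSingleton'_apply_self ..)⟩

end HahnBanach

section FiberDominated

variable {X : Type*} [MeasurableSpace X]

/-- The functions on `X × Y` that are dominated, uniformly in the second variable, by an integrable
function of the first variable. No measurability is required: the domain of the Hahn–Banach
functional may be any vector space on which the dual values are bounded below. -/
def fiberDominated (ν : Measure X) (Y : Type*) : Submodule ℝ (X × Y → ℝ) where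
  carrier := {h | ∃ a : X → ℝ, Integrable a ν ∧ ∀ x y, |h (x, y)| ≤ a x}
  zero_mem' := ⟨0, integrable_zero .., by simp⟩
  add_mem' := by
    rintro h h' ⟨a, ha, hle⟩ ⟨a', ha', hle'⟩
    exact ⟨a + a', ha.add ha', fun x y => (abs_add_le _ _).trans (add_le_add (hle x y) (hle' x y))⟩
  smul_mem' := by
    rintro t h ⟨a, ha, hle⟩
    refine ⟨fun x => |t| * a x, ha.const_mul _, fun x y => ?_⟩
    rw [Pi.smul_apply, smul_eq_mul, abs_mul]
    exact mul_le_mul_of_nonneg_left (hle x y) (abs_nonneg t)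

variable {Y : Type*} {ν : Measure X}

lemma comp_fst_mem_fiberDominated {f : X → ℝ} (hf : Integrable f ν) :
    (fun p : X × Y => f p.1) ∈ fiberDominated ν Y :=
  ⟨fun x => |f x|, hf.abs, fun _ _ => le_rfl⟩

lemma mem_fiberDominated_of_bounded [IsFiniteMeasure ν] {h : X × Y → ℝ} {C : ℝ}
    (hC : ∀ p, ‖h p‖ ≤ C) : h ∈ fiberDominated ν Y :=
  ⟨fun _ => C, integrable_const C, fun x y => hC (x, y)⟩

end FiberDominated

section DualValues

variable {X Y : Type*} [MeasurableSpace X] [MeasurableSpace Y]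

lemma integral_le_integral_fst_add_integral_snd {π : Measure (X × Y)} {c : X × Y → ℝ}
    {f : X → ℝ} {g : Y → ℝ} (hc : Integrable c π) (hf : Integrable f π.fst)
    (hg : Integrable g π.snd) (hle : ∀ᵐ p ∂π, c p ≤ f p.1 + g p.2) :
    ∫ p, c p ∂π ≤ ∫ x, f x ∂π.fst + ∫ y, g y ∂π.snd := by
  have hf' : Integrable (fun p : X × Y => f p.1) π := hf.comp_measurable measurable_fst
  have hg' : Integrable (fun p : X × Y => g p.2) π := hg.comp_measurable measurable_snd
  calc ∫ p, c p ∂π ≤ ∫ p, (f p.1 + g p.2) ∂π := integral_mono_ae hc (hf'.add hg') hle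
    _ = ∫ p, f p.1 ∂π + ∫ p, g p.2 ∂π := integral_add hf' hg'
    _ = ∫ x, f x ∂π.fst + ∫ y, g y ∂π.snd := by
      rw [Measure.fst, Measure.snd, integral_map measurable_fst.aemeasurable hf.1,
        integral_map measurable_snd.aemeasurable hg.1]

lemma integrable_of_abs_le_comp_fst {π : Measure (X × Y)} {h : X × Y → ℝ} {a : X → ℝ}
    (ha : Integrable a π.fst) (hh : AEStronglyMeasurable h π)
    (hle : ∀ x y, |h (x, y)| ≤ a x) : Integrable h π :=
  (ha.comp_measurable measurable_fst).mono' hh (Eventually.of_forall fun p => hle p.1 p.2)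

lemma abs_integral_le_integral_fst {π : Measure (X × Y)} {h : X × Y → ℝ} {a : X → ℝ}
    (ha : Integrable a π.fst) (hle : ∀ x y, |h (x, y)| ≤ a x) :
    |∫ p, h p ∂π| ≤ ∫ x, a x ∂π.fst := by
  rw [Measure.fst, integral_map measurable_fst.aemeasurable ha.1]
  exact norm_integral_le_of_norm_le (f := h) (g := fun p => a p.1)
    (ha.comp_measurable measurable_fst) (Eventually.of_forall fun p => hle p.1 p.2)

/-- The objective values of the Kantorovich dual of maximising `∫ c ∂π` over the couplings `π` of
`ν` and `ρ`. -/
def dualValues (ν : Measure X) (ρ : Measure Y) (c : X × Y → ℝ) : Set ℝ :=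
  {r | ∃ (f : X → ℝ) (g : Y → ℝ), Integrable f ν ∧ Integrable g ρ ∧
    (∀ x y, c (x, y) ≤ f x + g y) ∧ r = ∫ x, f x ∂ν + ∫ y, g y ∂ρ}

variable {ν : Measure X} {ρ : Measure Y}

lemma dualValues_add_subset (h h' : X × Y → ℝ) :
    dualValues ν ρ h + dualValues ν ρ h' ⊆ dualValues ν ρ (h + h') := by
  rintro _ ⟨_, ⟨f, g, hf, hg, hle, rfl⟩, _, ⟨f', g', hf', hg', hle', rfl⟩, rfl⟩
  refine ⟨f + f', g + g', hf.add hf', hg.add hg', fun x y => ?_, ?_⟩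
  · linarith [hle x y, hle' x y, Pi.add_apply h h' (x, y), Pi.add_apply f f' x,
      Pi.add_apply g g' y]
  · simp only [integral_add' hf hf', integral_add' hg hg']
    ring

lemma smul_dualValues_subset {t : ℝ} (ht : 0 ≤ t) (h : X × Y → ℝ) :
    t • dualValues ν ρ h ⊆ dualValues ν ρ (t • h) := by
  rintro _ ⟨_, ⟨f, g, hf, hg, hle, rfl⟩, rfl⟩
  refine ⟨fun x => t * f x, fun y => t * g y, hf.const_mul t, hg.const_mul t, fun x y => ?_, ?_⟩
  · rw [Pi.smul_apply, smul_eq_mul, ← mul_add]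
    exact mul_le_mul_of_nonneg_left (hle x y) ht
  · simp only [integral_const_mul, smul_eq_mul, mul_add]

lemma dualValues_smul {t : ℝ} (ht : 0 < t) (h : X × Y → ℝ) :
    dualValues ν ρ (t • h) = t • dualValues ν ρ h := by
  refine Subset.antisymm ?_ (smul_dualValues_subset ht.le h)
  rw [subset_smul_set_iff₀ ht.ne']
  simpa only [inv_smul_smul₀ ht.ne'] using
    smul_dualValues_subset (ν := ν) (ρ := ρ) (inv_nonneg.2 ht.le) (t • h)

lemma dualValues_nonempty {h : X × Y → ℝ} (hh : h ∈ fiberDominated ν Y) :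
    (dualValues ν ρ h).Nonempty := by
  obtain ⟨a, ha, hle⟩ := hh
  exact ⟨_, a, 0, ha, integrable_zero .., fun x y => by simpa using (le_abs_self _).trans (hle x y),
    rfl⟩

variable [IsProbabilityMeasure ν] [IsProbabilityMeasure ρ]

lemma bddBelow_dualValues {h : X × Y → ℝ} (hh : h ∈ fiberDominated ν Y) :
    BddBelow (dualValues ν ρ h) := by
  obtain ⟨a, ha, hle⟩ := hh
  refine ⟨-∫ x, a x ∂ν, ?_⟩
  rintro _ ⟨f, g, hf, hg, hfg, rfl⟩
  have nonneg : ∀ p : X × Y, 0 ≤ (f + a) p.1 + g p.2 := fun p => by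
    linarith [hfg p.1 p.2, hle p.1 p.2, neg_abs_le (h p), Pi.add_apply f a p.1]
  have key := integral_le_integral_fst_add_integral_snd (π := ν.prod ρ)
    (integrable_zero (X × Y) ℝ _)
    (by rw [Measure.fst_prod]; exact hf.add ha) (by rwa [Measure.snd_prod])
    (Eventually.of_forall nonneg)
  rw [Measure.fst_prod, Measure.snd_prod, integral_zero', integral_add' hf ha] at key
  linarith

/-- A finitely additive coupling of `ν` and `ρ`: a linear functional that satisfies weak duality.
Positivity and the two marginal conditions follow. -/
def IsFinitelyAdditiveCoupling (ν : Measure X) (ρ : Measure Y)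
    (L : fiberDominated ν Y →ₗ[ℝ] ℝ) : Prop :=
  ∀ h : fiberDominated ν Y, ∀ r ∈ dualValues ν ρ h, L h ≤ r

theorem exists_isFinitelyAdditiveCoupling_eq_sInf (c : fiberDominated ν Y) :
    ∃ L, IsFinitelyAdditiveCoupling ν ρ L ∧ L c = sInf (dualValues ν ρ c) := by
  obtain ⟨L, L_le, L_eq⟩ := exists_linearMap_le_sublinear_eq
    (N := fun h : fiberDominated ν Y => sInf (dualValues ν ρ h))
    (fun t ht h => by
      rw [Submodule.coe_smul, dualValues_smul ht, Real.sInf_smul_of_nonneg ht.le, smul_eq_mul])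
    (fun h h' => by
      have hne := dualValues_nonempty (ρ := ρ) h.2
      have hne' := dualValues_nonempty (ρ := ρ) h'.2
      rw [← csInf_add hne (bddBelow_dualValues h.2) hne' (bddBelow_dualValues h'.2)]
      exact csInf_le_csInf (bddBelow_dualValues (h + h').2) (hne.add hne')
        (dualValues_add_subset h.1 h'.1)) c
  exact ⟨L, fun h r hr => (L_le h).trans (csInf_le (bddBelow_dualValues h.2) hr), L_eq⟩

end DualValues

section FinitelyAdditiveCoupling

variable {X Y : Type*} [MeasurableSpace X] [MeasurableSpace Y] {ν : Measure X} {ρ : Measure Y}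
  {L : fiberDominated ν Y →ₗ[ℝ] ℝ}

lemma IsFinitelyAdditiveCoupling.apply_le (hL : IsFinitelyAdditiveCoupling ν ρ L)
    {h : fiberDominated ν Y} {f : X → ℝ} {g : Y → ℝ} (hf : Integrable f ν) (hg : Integrable g ρ)
    (hle : ∀ x y, h.1 (x, y) ≤ f x + g y) : L h ≤ ∫ x, f x ∂ν + ∫ y, g y ∂ρ :=
  hL h _ ⟨f, g, hf, hg, hle, rfl⟩

lemma IsFinitelyAdditiveCoupling.le_apply (hL : IsFinitelyAdditiveCoupling ν ρ L)
    {h : fiberDominated ν Y} {f : X → ℝ} {g : Y → ℝ} (hf : Integrable f ν) (hg : Integrable g ρ)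
    (hle : ∀ x y, f x + g y ≤ h.1 (x, y)) : ∫ x, f x ∂ν + ∫ y, g y ∂ρ ≤ L h := by
  have key : L (-h) ≤ ∫ x, -f x ∂ν + ∫ y, -g y ∂ρ := hL.apply_le hf.neg hg.neg fun x y => by
    rw [Submodule.coe_neg, Pi.neg_apply]
    linarith [hle x y]
  rw [map_neg, integral_neg, integral_neg] at key
  linarith

lemma IsFinitelyAdditiveCoupling.apply_comp_fst (hL : IsFinitelyAdditiveCoupling ν ρ L)
    {h : fiberDominated ν Y} {f : X → ℝ} (hf : Integrable f ν) (hh : ∀ x y, h.1 (x, y) = f x) :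
    L h = ∫ x, f x ∂ν := by
  have h0 : Integrable (0 : Y → ℝ) ρ := integrable_zero ..
  refine le_antisymm ?_ ?_
  · simpa using hL.apply_le hf h0 fun x y => by simp [hh]
  · simpa using hL.le_apply hf h0 fun x y => by simp [hh]

lemma IsFinitelyAdditiveCoupling.apply_comp_snd (hL : IsFinitelyAdditiveCoupling ν ρ L)
    {h : fiberDominated ν Y} {g : Y → ℝ} (hg : Integrable g ρ) (hh : ∀ x y, h.1 (x, y) = g y) :
    L h = ∫ y, g y ∂ρ := by
  have h0 : Integrable (0 : X → ℝ) ν := integrable_zero ..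
  refine le_antisymm ?_ ?_
  · simpa using hL.apply_le h0 hg fun x y => by simp [hh]
  · simpa using hL.le_apply h0 hg fun x y => by simp [hh]

lemma IsFinitelyAdditiveCoupling.abs_apply_le (hL : IsFinitelyAdditiveCoupling ν ρ L)
    {h : fiberDominated ν Y} {a : X → ℝ} (ha : Integrable a ν)
    (hle : ∀ x y, |h.1 (x, y)| ≤ a x) : |L h| ≤ ∫ x, a x ∂ν := by
  have h0 : Integrable (0 : Y → ℝ) ρ := integrable_zero ..
  refine abs_le.2 ⟨?_, ?_⟩
  · simpa [integral_neg] using hL.le_apply ha.neg h0 fun x y => by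
      simpa using neg_le_of_abs_le (hle x y)
  · simpa using hL.apply_le ha h0 fun x y => by simpa using le_of_abs_le (hle x y)

lemma IsFinitelyAdditiveCoupling.nonneg (hL : IsFinitelyAdditiveCoupling ν ρ L)
    {h : fiberDominated ν Y} (hh : ∀ p, 0 ≤ h.1 p) : 0 ≤ L h := by
  simpa using hL.le_apply (integrable_zero X ℝ ν) (integrable_zero Y ℝ ρ) fun x y => by
    simpa using hh (x, y)

end FinitelyAdditiveCoupling

section Kantorovich

lemma hasCompactSupport_comp_fst {X Y : Type*} [TopologicalSpace X] [TopologicalSpace Y]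
    [T2Space X] [T2Space Y] [CompactSpace Y] {f : X → ℝ} (hf : HasCompactSupport f) :
    HasCompactSupport fun p : X × Y => f p.1 :=
  HasCompactSupport.intro (hf.isCompact.prod isCompact_univ) fun p hp =>
    image_eq_zero_of_notMem_tsupport fun hp' => hp ⟨hp', mem_univ p.2⟩

lemma exists_hasCompactSupport_integral_one_sub_mul_le {X : Type*} [TopologicalSpace X]
    [T2Space X] [LocallyCompactSpace X] [NormalSpace X] [MeasurableSpace X] [BorelSpace X]
    {ν : Measure X} [ν.Regular] {a : X → ℝ} (ha : Integrable a ν) {ε : ℝ}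
    (hε : 0 < ε) :
    ∃ χ : X → ℝ, Continuous χ ∧ HasCompactSupport χ ∧ (∀ x, χ x ∈ Icc 0 1) ∧
      Integrable (fun x => (1 - χ x) * a x) ν ∧ ∫ x, (1 - χ x) * a x ∂ν ≤ ε := by
  obtain ⟨g, hg_supp, hag, -, hg⟩ := ha.exists_hasCompactSupport_integral_sub_le hε
  obtain ⟨χ, χ_one, -, χ_supp, hχ⟩ := exists_continuous_one_zero_of_isCompact
    hg_supp.isCompact isClosed_empty (disjoint_empty _)
  have tail_le : ∀ x, ‖(1 - χ x) * a x‖ ≤ ‖a x - g x‖ := fun x => by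
    by_cases hx : x ∈ tsupport g
    · simp [χ_one hx]
    · rw [image_eq_zero_of_notMem_tsupport hx, sub_zero, norm_mul]
      refine mul_le_of_le_one_left (norm_nonneg _) ?_
      rw [Real.norm_of_nonneg (sub_nonneg.2 (hχ x).2)]
      exact sub_le_self _ (hχ x).1
  have htail : Integrable (fun x => (1 - χ x) * a x) ν :=
    (ha.sub hg).norm.mono' ((continuous_const.sub χ.continuous).aestronglyMeasurable.mul ha.1)
      (Eventually.of_forall tail_le)
  exact ⟨χ, χ.continuous, χ_supp, hχ, htail, (integral_mono htail (ha.sub hg).norm fun x =>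
    (le_abs_self _).trans (tail_le x)).trans hag⟩

variable {X Y : Type*} [TopologicalSpace X] [MeasurableSpace X]
  [TopologicalSpace Y] [T2Space Y] [CompactSpace Y] [MeasurableSpace Y]
  {ν : Measure X} {ρ : Measure Y} [IsFiniteMeasure ν] {L : fiberDominated ν Y →ₗ[ℝ] ℝ}

lemma IsFinitelyAdditiveCoupling.snd_eq [SecondCountableTopology Y] [BorelSpace Y]
    [IsFiniteMeasure ρ] (hL : IsFinitelyAdditiveCoupling ν ρ L)
    {π : Measure (X × Y)} [IsFiniteMeasure π]
    (integral_eq : ∀ h : fiberDominated ν Y, Continuous h.1 → ∫ p, h.1 p ∂π = L h) :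
    π.snd = ρ := by
  refine Measure.ext_of_integral_eq_on_compactlySupported fun φ => ?_
  have φ_cont : Continuous φ := φ.continuous
  have hφ : Integrable φ ρ := φ_cont.integrable_of_hasCompactSupport φ.hasCompactSupport
  obtain ⟨C, hC⟩ := φ.hasCompactSupport.exists_bound_of_continuous φ_cont
  let h : fiberDominated ν Y := ⟨fun p => φ p.2, mem_fiberDominated_of_bounded fun p => hC p.2⟩
  calc ∫ y, φ y ∂π.snd
      = ∫ p, h.1 p ∂π := integral_map measurable_snd.aemeasurable φ_cont.aestronglyMeasurable
    _ = L h := integral_eq h (φ_cont.comp continuous_snd)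
    _ = ∫ y, φ y ∂ρ := hL.apply_comp_snd hφ fun _ _ => rfl

variable [T2Space X] [LocallyCompactSpace X] [BorelSpace X]

lemma IsFinitelyAdditiveCoupling.exists_regular_integral_eq [SecondCountableTopology Y]
    [BorelSpace Y] (hL : IsFinitelyAdditiveCoupling ν ρ L) :
    ∃ π : Measure (X × Y), π.Regular ∧ ∀ h : fiberDominated ν Y, Continuous h.1 →
      HasCompactSupport h.1 → ∫ p, h.1 p ∂π = L h := by
  let ofCompactlySupported : C_c(X × Y, ℝ) →ₗ[ℝ] fiberDominated ν Y :=
    { toFun := fun φ => ⟨φ, mem_fiberDominated_of_bounded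
        (φ.hasCompactSupport.exists_bound_of_continuous φ.continuous).choose_spec⟩
      map_add' := fun _ _ => rfl
      map_smul' := fun _ _ => rfl }
  let Λ : C_c(X × Y, ℝ) →ₚ[ℝ] ℝ :=
    PositiveLinearMap.mk₀ (L ∘ₗ ofCompactlySupported) fun φ hφ => hL.nonneg hφ
  exact ⟨RealRMK.rieszMeasure Λ, RealRMK.regular_rieszMeasure Λ,
    fun h hh hh' => RealRMK.integral_rieszMeasure Λ ⟨⟨h, hh⟩, hh'⟩⟩

lemma IsFinitelyAdditiveCoupling.fst_eq [SecondCountableTopology X]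
    (hL : IsFinitelyAdditiveCoupling ν ρ L) {π : Measure (X × Y)} [IsFiniteMeasureOnCompacts π]
    (integral_eq : ∀ h : fiberDominated ν Y, Continuous h.1 → HasCompactSupport h.1 →
      ∫ p, h.1 p ∂π = L h) : π.fst = ν := by
  have fst_finite : IsFiniteMeasureOnCompacts π.fst := ⟨fun K hK => by
    rw [Measure.fst_apply hK.measurableSet, ← prod_univ]
    exact (hK.prod isCompact_univ).measure_lt_top⟩
  refine Measure.ext_of_integral_eq_on_compactlySupported fun φ => ?_
  have φ_cont : Continuous φ := φ.continuous
  have hφ : Integrable φ ν := φ_cont.integrable_of_hasCompactSupport φ.hasCompactSupport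
  let h : fiberDominated ν Y := ⟨fun p => φ p.1, comp_fst_mem_fiberDominated hφ⟩
  calc ∫ x, φ x ∂π.fst
      = ∫ p, h.1 p ∂π := integral_map measurable_fst.aemeasurable φ_cont.aestronglyMeasurable
    _ = L h := integral_eq h (φ_cont.comp continuous_fst)
        (hasCompactSupport_comp_fst φ.hasCompactSupport)
    _ = ∫ x, φ x ∂ν := hL.apply_comp_fst hφ fun _ _ => rfl

variable [SecondCountableTopology X] [SecondCountableTopology Y] [BorelSpace Y]

lemma IsFinitelyAdditiveCoupling.integral_eq_of_continuous
    (hL : IsFinitelyAdditiveCoupling ν ρ L) {π : Measure (X × Y)} (hπ : π.fst = ν)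
    (integral_eq : ∀ h : fiberDominated ν Y, Continuous h.1 → HasCompactSupport h.1 →
      ∫ p, h.1 p ∂π = L h) {h : fiberDominated ν Y} (hh : Continuous h.1) :
    ∫ p, h.1 p ∂π = L h := by
  subst hπ
  refine eq_of_forall_dist_le fun ε hε => ?_
  obtain ⟨a, ha, hle⟩ := h.2
  obtain ⟨χ, χ_cont, χ_supp, hχ, htail, htail_le⟩ :=
    exists_hasCompactSupport_integral_one_sub_mul_le ha (half_pos hε)
  have core_le : ∀ x y, |χ x * h.1 (x, y)| ≤ a x := fun x y => by
    rw [abs_mul, abs_of_nonneg (hχ x).1]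
    exact (mul_le_of_le_one_left (abs_nonneg _) (hχ x).2).trans (hle x y)
  let core : fiberDominated π.fst Y := ⟨fun p => χ p.1 * h.1 p, a, ha, core_le⟩
  have core_cont : Continuous core.1 := (χ_cont.comp continuous_fst).mul hh
  have core_supp : HasCompactSupport core.1 := (hasCompactSupport_comp_fst χ_supp).mul_right
  have tail_le : ∀ x y, |(h - core).1 (x, y)| ≤ (1 - χ x) * a x := fun x y => by
    have tail_eq : (h - core).1 (x, y) = (1 - χ x) * h.1 (x, y) := (one_sub_mul _ _).symm
    rw [tail_eq, abs_mul, abs_of_nonneg (sub_nonneg.2 (hχ x).2)]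
    exact mul_le_mul_of_nonneg_left (hle x y) (sub_nonneg.2 (hχ x).2)
  have h_int : Integrable h.1 π := integrable_of_abs_le_comp_fst ha hh.aestronglyMeasurable hle
  have core_int : Integrable core.1 π :=
    integrable_of_abs_le_comp_fst ha core_cont.aestronglyMeasurable core_le
  calc dist (∫ p, h.1 p ∂π) (L h)
      = |∫ p, (h - core).1 p ∂π - L (h - core)| := by
        rw [map_sub, ← integral_eq core core_cont core_supp, Submodule.coe_sub,
          integral_sub' h_int core_int, sub_sub_sub_cancel_right, Real.dist_eq]
    _ ≤ |∫ p, (h - core).1 p ∂π| + |L (h - core)| := abs_sub _ _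
    _ ≤ ε / 2 + ε / 2 := add_le_add ((abs_integral_le_integral_fst htail tail_le).trans htail_le)
        ((hL.abs_apply_le htail tail_le).trans htail_le)
    _ = ε := add_halves ε

theorem exists_fst_eq_snd_eq_integral_eq_sInf_dualValues [IsProbabilityMeasure ν]
    [IsProbabilityMeasure ρ] {c : X × Y → ℝ} (hc : Continuous c) (hcν : c ∈ fiberDominated ν Y) :
    ∃ π : Measure (X × Y), π.fst = ν ∧ π.snd = ρ ∧ ∫ p, c p ∂π = sInf (dualValues ν ρ c) := by
  obtain ⟨L, hL, L_eq⟩ := exists_isFinitelyAdditiveCoupling_eq_sInf (ρ := ρ) ⟨c, hcν⟩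
  obtain ⟨π, π_regular, hπ⟩ := hL.exists_regular_integral_eq
  have hπν : π.fst = ν := hL.fst_eq hπ
  have π_finite : IsFiniteMeasure π := ⟨by
    rw [← Measure.fst_univ, hπν]
    exact measure_lt_top ν univ⟩
  have integral_eq : ∀ h : fiberDominated ν Y, Continuous h.1 → ∫ p, h.1 p ∂π = L h :=
    fun h hh => hL.integral_eq_of_continuous hπν hπ hh
  exact ⟨π, hπν, hL.snd_eq integral_eq, (integral_eq ⟨c, hcν⟩ hc).trans L_eq⟩

theorem exists_fst_eq_snd_eq_forall_exists_dual_lt {X Y : Type*}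
    [TopologicalSpace X] [T2Space X] [LocallyCompactSpace X] [SecondCountableTopology X]
    [MeasurableSpace X] [BorelSpace X]
    [TopologicalSpace Y] [T2Space Y] [SecondCountableTopology Y] [MeasurableSpace Y] [BorelSpace Y]
    {ν : Measure X} {ρ : Measure Y} [IsProbabilityMeasure ν] [IsProbabilityMeasure ρ]
    {K : Set Y} (hK : IsCompact K) (hρ : ρ Kᶜ = 0) {c : X × Y → ℝ} (hc : Continuous c)
    {a : X → ℝ} (ha : Integrable a ν) (hca : ∀ x, ∀ y ∈ K, |c (x, y)| ≤ a x) :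
    ∃ π : Measure (X × Y), π.fst = ν ∧ π.snd = ρ ∧ ∀ ε > 0, ∃ (f : X → ℝ) (g : Y → ℝ),
      Integrable f ν ∧ Integrable g ρ ∧ (∀ x, ∀ y ∈ K, c (x, y) ≤ f x + g y) ∧
      ∫ x, f x ∂ν + ∫ y, g y ∂ρ < ∫ p, c p ∂π + ε := by
  have K_compact : CompactSpace K := isCompact_iff_compactSpace.1 hK
  have val_emb : MeasurableEmbedding ((↑) : K → Y) := .subtype_coe hK.measurableSet
  let ρK : Measure K := ρ.comap (↑)
  have map_ρK : ρK.map (↑) = ρ := by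
    rw [map_comap_subtype_coe hK.measurableSet, Measure.restrict_eq_self_of_ae_mem hρ]
  have ρK_prob : IsProbabilityMeasure ρK :=
    val_emb.isProbabilityMeasure_comap (by rwa [Subtype.range_coe])
  have incl_cont : Continuous fun p : X × K => (p.1, (p.2 : Y)) := by fun_prop
  obtain ⟨π, rfl, π_snd, integral_eq⟩ :=
    exists_fst_eq_snd_eq_integral_eq_sInf_dualValues (ρ := ρK) (hc.comp incl_cont)
      ⟨a, ha, fun x y => hca x y y.2⟩
  refine ⟨π.map fun p => (p.1, (p.2 : Y)), ?_, ?_, fun ε hε => ?_⟩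
  · exact Measure.fst_map_prodMk (by fun_prop)
  · rw [Measure.snd_map_prodMk (by fun_prop), ← map_ρK, ← π_snd, Measure.snd,
      Measure.map_map (by fun_prop) (by fun_prop)]
    rfl
  rw [integral_map incl_cont.measurable.aemeasurable hc.aestronglyMeasurable]
  obtain ⟨_, ⟨f, g, hf, hg, hle, rfl⟩, hlt⟩ := exists_lt_of_csInf_lt
    (dualValues_nonempty (ρ := ρK) ⟨a, ha, fun x y => hca x y y.2⟩)
    (integral_eq.symm.trans_lt (lt_add_of_pos_right _ hε))
  let gY : Y → ℝ := Function.extend Subtype.val g 0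
  have gY_coe : ∀ y : K, gY y = g y := Subtype.val_injective.extend_apply g 0
  refine ⟨f, gY, hf, ?_, fun x y hy => ?_, ?_⟩
  · rwa [← map_ρK, val_emb.integrable_map_iff, show gY ∘ Subtype.val = g from funext gY_coe]
  · exact (gY_coe ⟨y, hy⟩).symm ▸ hle x ⟨y, hy⟩
  · rw [← map_ρK, val_emb.integral_map]
    simp only [gY_coe]
    exact hlt

end Kantorovich

section FenchelConj

variable {ι E : Type*} [NormedAddCommGroup E] [InnerProductSpace ℝ E]

/-- The Legendre–Fenchel conjugate of the function with value `g i` at the point `q i` and `+∞`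
elsewhere. Where the supremum is infinite, that is, off `fenchelDomain q g`, the value is `0`. -/
def fenchelConj (q : ι → E) (g : ι → ℝ) (y : E) : ℝ :=
  ⨆ i, (⟪q i, y⟫ - g i)

/-- The effective domain of the conjugate `fenchelConj q g`. -/
def fenchelDomain (q : ι → E) (g : ι → ℝ) : Set E :=
  {y | BddAbove (range fun i => ⟪q i, y⟫ - g i)}

variable {q : ι → E} {g : ι → ℝ} {y : E}

lemma inner_le_add_fenchelConj (hy : y ∈ fenchelDomain q g) (i : ι) :
    ⟪q i, y⟫ ≤ g i + fenchelConj q g y :=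
  sub_le_iff_le_add'.1 (le_ciSup hy i)

lemma mem_fenchelDomain_of_inner_le {C : ℝ} (h : ∀ i, ⟪q i, y⟫ ≤ g i + C) :
    y ∈ fenchelDomain q g :=
  ⟨C, forall_mem_range.2 fun i => sub_le_iff_le_add'.2 (h i)⟩

lemma fenchelConj_le_of_inner_le [Nonempty ι] {C : ℝ} (h : ∀ i, ⟪q i, y⟫ ≤ g i + C) :
    fenchelConj q g y ≤ C :=
  ciSup_le fun i => sub_le_iff_le_add'.2 (h i)

lemma inner_combo_le_add_fenchelConj {z : E} (hy : y ∈ fenchelDomain q g)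
    (hz : z ∈ fenchelDomain q g) {a b : ℝ} (ha : 0 ≤ a) (hb : 0 ≤ b) (hab : a + b = 1) (i : ι) :
    ⟪q i, a • y + b • z⟫ ≤ g i + (a * fenchelConj q g y + b * fenchelConj q g z) := by
  calc ⟪q i, a • y + b • z⟫ = a * ⟪q i, y⟫ + b * ⟪q i, z⟫ := by
        rw [inner_add_right, real_inner_smul_right, real_inner_smul_right]
    _ ≤ a * (g i + fenchelConj q g y) + b * (g i + fenchelConj q g z) := by
        gcongr
        exacts [inner_le_add_fenchelConj hy i, inner_le_add_fenchelConj hz i]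
    _ = g i + (a * fenchelConj q g y + b * fenchelConj q g z) := by
        linear_combination g i * hab

lemma convexOn_fenchelConj [Nonempty ι] : ConvexOn ℝ (fenchelDomain q g) (fenchelConj q g) :=
  ⟨fun _ hy _ hz _ _ ha hb hab =>
    mem_fenchelDomain_of_inner_le (inner_combo_le_add_fenchelConj hy hz ha hb hab),
  fun _ hy _ hz _ _ ha hb hab =>
    fenchelConj_le_of_inner_le (inner_combo_le_add_fenchelConj hy hz ha hb hab)⟩

lemma lipschitzOnWith_fenchelConj [Nonempty ι] {K : NNReal} (hK : ∀ i, ‖q i‖ ≤ K) :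
    LipschitzOnWith K (fenchelConj q g) (fenchelDomain q g) := by
  refine LipschitzOnWith.of_le_add_mul K fun y _ z hz => fenchelConj_le_of_inner_le fun i => ?_
  calc ⟪q i, y⟫ = ⟪q i, z⟫ + ⟪q i, y - z⟫ := by rw [← inner_add_right, add_sub_cancel]
    _ ≤ g i + fenchelConj q g z + K * dist y z := by
        refine add_le_add (inner_le_add_fenchelConj hz i) ((real_inner_le_norm _ _).trans ?_)
        rw [dist_eq_norm]
        gcongr
        exact hK i
    _ = g i + (fenchelConj q g z + K * dist y z) := add_assoc ..

variable {f : E → ℝ}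

lemma norm_le_of_mem_fenchelDomain {K : NNReal} (hf : LipschitzWith K f)
    (hy : y ∈ fenchelDomain id f) : ‖y‖ ≤ K := by
  by_contra! hlt
  have y_pos : 0 < ‖y‖ := K.coe_nonneg.trans_lt hlt
  obtain ⟨n, hn⟩ := exists_nat_gt ((f 0 + fenchelConj id f y) / (‖y‖ * (‖y‖ - K)))
  rw [div_lt_iff₀ (mul_pos y_pos (sub_pos.2 hlt))] at hn
  have growth : f ((n : ℝ) • y) ≤ f 0 + K * (n * ‖y‖) := by
    simpa [norm_smul] using hf.le_add_mul ((n : ℝ) • y) 0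
  have young : n * ‖y‖ ^ 2 ≤ f ((n : ℝ) • y) + fenchelConj id f y := by
    simpa [real_inner_smul_left] using
      inner_le_add_fenchelConj hy ((n : ℝ) • y)
  linarith

lemma measurable_fenchelConj_id [TopologicalSpace.SeparableSpace E] [MeasurableSpace E]
    [BorelSpace E] (hf : Continuous f) : Measurable (fenchelConj id f) := by
  obtain ⟨s, s_countable, s_dense⟩ := TopologicalSpace.exists_countable_dense E
  have : Countable s := s_countable.to_subtype
  have eq_iSup : fenchelConj id f = fun y => ⨆ x : s, (⟪x.1, y⟫ - f x) := funext fun y =>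
    (s_dense.ciSup' (f := fun x => ⟪x, y⟫ - f x) (by fun_prop)).symm
  rw [eq_iSup]
  exact Measurable.iSup fun x => by fun_prop

lemma exists_seq_approx_subgradient [CompleteSpace E] [SecondCountableTopology E]
    (hf : ConvexOn ℝ univ f) (hfc : Continuous f) :
    ∃ q : ℕ → E, (∀ i, q i ∈ fenchelDomain id f) ∧
      ∀ x, ∀ ε > 0, ∃ i, f x + fenchelConj id f (q i) < ⟪x, q i⟫ + ε := by
  obtain ⟨l, c, l_le, iSup_eq⟩ := hf.real_univ_sSup_of_nat_affine_eq hfc.lowerSemicontinuous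
  let q : ℕ → E := fun i => (InnerProductSpace.toDual ℝ E).symm (l i)
  have inner_q : ∀ i x, ⟪x, q i⟫ = l i x := fun i x => by
    rw [real_inner_comm]
    exact InnerProductSpace.toDual_symm_apply
  have inner_le : ∀ i x, ⟪x, q i⟫ ≤ f x + -c i := fun i x => by
    rw [inner_q]
    exact le_add_neg_iff_add_le.2 (l_le i x)
  refine ⟨q, fun i => mem_fenchelDomain_of_inner_le (inner_le i), fun x ε hε => ?_⟩
  have lt_iSup : f x - ε < ⨆ i, (l i x + c i) := by
    have f_eq : ⨆ i, (l i x + c i) = f x := (iSup_apply ..).symm.trans (congrFun iSup_eq x)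
    rw [f_eq]
    exact sub_lt_self _ hε
  obtain ⟨i, hi⟩ := exists_lt_of_lt_ciSup lt_iSup
  refine ⟨i, ?_⟩
  have conj_le : fenchelConj id f (q i) ≤ -c i := fenchelConj_le_of_inner_le (inner_le i)
  rw [inner_q]
  linarith

lemma exists_measurable_approx_subgradient [CompleteSpace E] [SecondCountableTopology E]
    [MeasurableSpace E] [BorelSpace E] (hf : ConvexOn ℝ univ f) (hfc : Continuous f) {ε : ℝ}
    (hε : 0 < ε) :
    ∃ T : E → E, Measurable T ∧ (range T).Countable ∧ (∀ x, T x ∈ fenchelDomain id f) ∧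
      ∀ x, f x + fenchelConj id f (T x) < ⟪x, T x⟫ + ε := by
  classical
  obtain ⟨q, q_mem, hq⟩ := exists_seq_approx_subgradient hf hfc
  have index_exists : ∀ x, ∃ i, f x + fenchelConj id f (q i) < ⟪x, q i⟫ + ε := fun x => hq x ε hε
  have index_measurable : Measurable fun x => Nat.find (index_exists x) :=
    measurable_find index_exists fun i => measurableSet_lt (by fun_prop) (by fun_prop)
  exact ⟨fun x => q (Nat.find (index_exists x)), measurable_from_nat.comp index_measurable,
    (countable_range q).mono (range_comp_subset_range _ q), fun _ => q_mem _,
    fun x => Nat.find_spec (index_exists x)⟩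

end FenchelConj

lemma integrable_of_lipschitzWith {E : Type*} [NormedAddCommGroup E] [MeasurableSpace E]
    [BorelSpace E] {μ : Measure E} [IsFiniteMeasure μ]
    (hμ : Integrable (fun x => ‖x‖) μ) {K : NNReal} {f : E → ℝ} (hf : LipschitzWith K f) :
    Integrable f μ := by
  refine ((integrable_const ‖f 0‖).add (hμ.const_mul K)).mono'
    hf.continuous.aestronglyMeasurable (Eventually.of_forall fun x => ?_)
  calc ‖f x‖ ≤ ‖f 0‖ + ‖f x - f 0‖ := norm_le_norm_add_norm_sub' _ _
    _ ≤ ‖f 0‖ + K * ‖x‖ := by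
      gcongr
      simpa using hf.norm_sub_le x 0

lemma integrable_fenchelConj_map {E : Type*} [NormedAddCommGroup E] [InnerProductSpace ℝ E]
    [SecondCountableTopology E] [MeasurableSpace E] [BorelSpace E] {μ : Measure E}
    [IsFiniteMeasure μ] (hμ : Integrable (fun x => ‖x‖) μ) {K : NNReal} {f : E → ℝ}
    (hf : LipschitzWith K f) {T : E → E} (hT : Measurable T)
    (hT_dom : ∀ x, T x ∈ fenchelDomain id f) {ε : ℝ}
    (hle : ∀ x, f x + fenchelConj id f (T x) ≤ ⟪x, T x⟫ + ε) :
    Integrable (fenchelConj id f) (μ.map T) := by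
  have conj_measurable : Measurable (fenchelConj id f) := measurable_fenchelConj_id hf.continuous
  rw [integrable_map_measure conj_measurable.aestronglyMeasurable hT.aemeasurable]
  have inner_le : ∀ x, ⟪x, T x⟫ ≤ ‖x‖ * K := fun x => (real_inner_le_norm _ _).trans
    (mul_le_mul_of_nonneg_left (norm_le_of_mem_fenchelDomain hf (hT_dom x)) (norm_nonneg x))
  have lower : ∀ x, -f 0 ≤ fenchelConj id f (T x) := fun x => by
    simpa [neg_le_iff_add_nonneg'] using inner_le_add_fenchelConj (hT_dom x) 0
  have upper : ∀ x, fenchelConj id f (T x) ≤ ‖x‖ * K + ε - f x := fun x => by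
    linarith [hle x, inner_le x]
  have upper_int : Integrable (fun x => ‖x‖ * K + ε - f x) μ :=
    ((hμ.mul_const K).add (integrable_const ε)).sub (integrable_of_lipschitzWith hμ hf)
  exact integrable_of_le_of_le (conj_measurable.comp hT).aestronglyMeasurable
    (Eventually.of_forall lower) (Eventually.of_forall upper) (integrable_const _) upper_int

lemma abs_inner_le_norm_mul_of_mem_closedBall {E : Type*} [NormedAddCommGroup E]
    [InnerProductSpace ℝ E] {R : ℝ} (x : E) {y : E} (hy : y ∈ closedBall 0 R) :
    |⟪x, y⟫| ≤ ‖x‖ * R :=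
  (abs_real_inner_le_norm x y).trans
    (mul_le_mul_of_nonneg_left (mem_closedBall_zero_iff.1 hy) (norm_nonneg x))

section OTcost

variable {d : ℕ} {α β : Measure (EuclideanSpace ℝ (Fin d))} {R : ℝ}
  {f g : EuclideanSpace ℝ (Fin d) → ℝ}

lemma integrable_inner_of_mem_couplings (hα : Integrable (fun x => ‖x‖) α)
    (hβ : β (closedBall 0 R)ᶜ = 0)
    {π : Measure (EuclideanSpace ℝ (Fin d) × EuclideanSpace ℝ (Fin d))}
    (hπ : π ∈ Couplings α β) : Integrable (fun p => ⟪p.1, p.2⟫) π := by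
  obtain ⟨rfl, rfl⟩ := hπ
  have snd_mem : ∀ᵐ p ∂π, p.2 ∈ closedBall 0 R := ae_of_ae_map measurable_snd.aemeasurable hβ
  exact ((hα.comp_measurable measurable_fst).mul_const R).mono' (by fun_prop)
    (snd_mem.mono fun p hp => abs_inner_le_norm_mul_of_mem_closedBall p.1 hp)

lemma integral_inner_le_of_inner_le (hα : Integrable (fun x => ‖x‖) α)
    (hβ : β (closedBall 0 R)ᶜ = 0) (hf : Integrable f α) (hg : Integrable g β)
    (hle : ∀ᵐ y ∂β, ∀ x, ⟪x, y⟫ ≤ f x + g y)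
    {π : Measure (EuclideanSpace ℝ (Fin d) × EuclideanSpace ℝ (Fin d))}
    (hπ : π ∈ Couplings α β) : ∫ p, ⟪p.1, p.2⟫ ∂π ≤ ∫ x, f x ∂α + ∫ y, g y ∂β := by
  have h_int := integrable_inner_of_mem_couplings hα hβ hπ
  obtain ⟨rfl, rfl⟩ := hπ
  exact integral_le_integral_fst_add_integral_snd h_int hf hg
    ((ae_of_ae_map measurable_snd.aemeasurable hle).mono fun p hp => hp p.1)

lemma integral_inner_le_OTcost (hα : Integrable (fun x => ‖x‖) α)
    (hβ : β (closedBall 0 R)ᶜ = 0)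
    {π : Measure (EuclideanSpace ℝ (Fin d) × EuclideanSpace ℝ (Fin d))}
    (hπ : π ∈ Couplings α β) : ∫ p, ⟪p.1, p.2⟫ ∂π ≤ OTcost α β := by
  have β_ball : ∀ᵐ y ∂β, y ∈ closedBall 0 R := hβ
  have inner_le : ∀ᵐ y ∂β, ∀ x, ⟪x, y⟫ ≤ ‖x‖ * R + 0 := β_ball.mono fun y hy x => by
    rw [add_zero]
    exact le_of_abs_le (abs_inner_le_norm_mul_of_mem_closedBall x hy)
  refine le_csSup ⟨∫ x, ‖x‖ * R ∂α + ∫ _, 0 ∂β, ?_⟩ ⟨π, hπ, rfl⟩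
  rintro _ ⟨π', hπ', rfl⟩
  exact integral_inner_le_of_inner_le hα hβ (hα.mul_const R) (integrable_zero ..) inner_le hπ'

variable [IsProbabilityMeasure α] [IsProbabilityMeasure β]

lemma OTcost_le_of_inner_le (hα : Integrable (fun x => ‖x‖) α)
    (hβ : β (closedBall 0 R)ᶜ = 0) (hf : Integrable f α) (hg : Integrable g β)
    (hle : ∀ᵐ y ∂β, ∀ x, ⟪x, y⟫ ≤ f x + g y) :
    OTcost α β ≤ ∫ x, f x ∂α + ∫ y, g y ∂β := by
  refine csSup_le ⟨_, α.prod β, ⟨Measure.fst_prod, Measure.snd_prod⟩, rfl⟩ ?_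
  rintro _ ⟨π, hπ, rfl⟩
  exact integral_inner_le_of_inner_le hα hβ hf hg hle hπ

lemma exists_integral_add_integral_lt_OTcost_add (hα : Integrable (fun x => ‖x‖) α)
    (hβ : β (closedBall 0 R)ᶜ = 0) {ε : ℝ} (hε : 0 < ε) :
    ∃ f g : EuclideanSpace ℝ (Fin d) → ℝ, Integrable f α ∧ Integrable g β ∧
      (∀ x, ∀ y ∈ closedBall 0 R, ⟪x, y⟫ ≤ f x + g y) ∧
      ∫ x, f x ∂α + ∫ y, g y ∂β < OTcost α β + ε := by
  obtain ⟨π, hπ_fst, hπ_snd, hπ⟩ := exists_fst_eq_snd_eq_forall_exists_dual_lt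
    (isCompact_closedBall 0 R) hβ (c := fun p => ⟪p.1, p.2⟫) (by fun_prop) (hα.mul_const R)
    fun x _ hy => abs_inner_le_norm_mul_of_mem_closedBall x hy
  obtain ⟨f, g, hf, hg, hle, hlt⟩ := hπ ε hε
  exact ⟨f, g, hf, hg, hle, hlt.trans_le
    (add_le_add_left (integral_inner_le_OTcost hα hβ ⟨hπ_fst, hπ_snd⟩) ε)⟩

lemma integral_add_integral_map_le_OTcost_add (hα : Integrable (fun x => ‖x‖) α)
    {T : EuclideanSpace ℝ (Fin d) → EuclideanSpace ℝ (Fin d)} (hT : Measurable T)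
    (hTα : α.map T (closedBall 0 R)ᶜ = 0) (hf : Integrable f α) (hg : Integrable g (α.map T))
    {ε : ℝ} (hle : ∀ x, f x + g (T x) ≤ ⟪x, T x⟫ + ε) :
    ∫ x, f x ∂α + ∫ y, g y ∂(α.map T) ≤ OTcost α (α.map T) + ε := by
  have graph_measurable : Measurable fun x => (x, T x) := by fun_prop
  have graph_coupling : α.map (fun x => (x, T x)) ∈ Couplings α (α.map T) :=
    ⟨(Measure.fst_map_prodMk hT).trans Measure.map_id, Measure.snd_map_prodMk measurable_id⟩
  have inner_int : Integrable (fun x => ⟪x, T x⟫) α :=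
    (integrable_inner_of_mem_couplings hα hTα graph_coupling).comp_measurable graph_measurable
  have hgT : Integrable (fun x => g (T x)) α := hg.comp_measurable hT
  calc ∫ x, f x ∂α + ∫ y, g y ∂(α.map T)
      = ∫ x, (f x + g (T x)) ∂α := by
        rw [integral_map hT.aemeasurable hg.1, integral_add hf hgT]
    _ ≤ ∫ x, (⟪x, T x⟫ + ε) ∂α :=
        integral_mono (hf.add hgT) (inner_int.add (integrable_const ε)) hle
    _ = ∫ p, ⟪p.1, p.2⟫ ∂(α.map fun x => (x, T x)) + ε := by
        rw [integral_map graph_measurable.aemeasurable (by fun_prop),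
          integral_add inner_int (integrable_const ε), integral_const, probReal_univ, one_smul]
    _ ≤ OTcost α (α.map T) + ε :=
        add_le_add_left (integral_inner_le_OTcost hα hTα graph_coupling) ε

end OTcost

section ConvexLipschitz

variable {d : ℕ} {μ ν : Measure (EuclideanSpace ℝ (Fin d))} [IsProbabilityMeasure μ]
  [IsProbabilityMeasure ν] {K : NNReal} {ε : ℝ}

theorem exists_OTcost_sub_le_integral_sub (hμ : Integrable (fun x => ‖x‖) μ)
    (hν : Integrable (fun y => ‖y‖) ν) {f : EuclideanSpace ℝ (Fin d) → ℝ}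
    (hf : ConvexOn ℝ univ f) (hfK : LipschitzWith K f) (hε : 0 < ε) :
    ∃ ρ : Measure (EuclideanSpace ℝ (Fin d)), IsProbabilityMeasure ρ ∧ ρ (closedBall 0 K)ᶜ = 0 ∧
      OTcost ν ρ - OTcost μ ρ ≤ ∫ x, f x ∂ν - ∫ x, f x ∂μ + ε := by
  obtain ⟨T, hT, T_countable, hT_dom, hT_lt⟩ :=
    exists_measurable_approx_subgradient hf hfK.continuous hε
  have hμf : Integrable f μ := integrable_of_lipschitzWith hμ hfK
  have hνf : Integrable f ν := integrable_of_lipschitzWith hν hfK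
  have map_dom : ∀ᵐ y ∂μ.map T, y ∈ fenchelDomain id f :=
    (ae_map_mem_range T T_countable.measurableSet μ).mono (forall_mem_range.2 hT_dom)
  have map_ball : μ.map T (closedBall 0 K)ᶜ = 0 :=
    map_dom.mono fun y hy => mem_closedBall_zero_iff.2 (norm_le_of_mem_fenchelDomain hfK hy)
  have conj_int : Integrable (fenchelConj id f) (μ.map T) :=
    integrable_fenchelConj_map hμ hfK hT hT_dom fun x => (hT_lt x).le
  have hprob : IsProbabilityMeasure (μ.map T) := Measure.isProbabilityMeasure_map hT.aemeasurable
  refine ⟨μ.map T, hprob, map_ball, ?_⟩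
  have ν_le : OTcost ν (μ.map T) ≤ ∫ x, f x ∂ν + ∫ y, fenchelConj id f y ∂(μ.map T) :=
    OTcost_le_of_inner_le hν map_ball hνf conj_int
      (map_dom.mono fun _ hy x => inner_le_add_fenchelConj hy x)
  have le_μ : ∫ x, f x ∂μ + ∫ y, fenchelConj id f y ∂(μ.map T) ≤ OTcost μ (μ.map T) + ε :=
    integral_add_integral_map_le_OTcost_add hμ hT map_ball hμf conj_int fun x => (hT_lt x).le
  linarith

theorem exists_integral_sub_le_OTcost_sub (hμ : Integrable (fun x => ‖x‖) μ)
    (hν : Integrable (fun y => ‖y‖) ν) {ρ : Measure (EuclideanSpace ℝ (Fin d))}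
    [IsProbabilityMeasure ρ] (hρ : ρ (closedBall 0 K)ᶜ = 0) (hε : 0 < ε) :
    ∃ f : EuclideanSpace ℝ (Fin d) → ℝ, ConvexOn ℝ univ f ∧ LipschitzWith K f ∧
      ∫ x, f x ∂ν - ∫ x, f x ∂μ ≤ OTcost ν ρ - OTcost μ ρ + ε := by
  obtain ⟨f, g, hf, hg, hle, hlt⟩ := exists_integral_add_integral_lt_OTcost_add hν hρ hε
  let B : Set (EuclideanSpace ℝ (Fin d)) := closedBall 0 K
  let F : EuclideanSpace ℝ (Fin d) → ℝ := fenchelConj Subtype.val fun y : B => g y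
  have B_nonempty : Nonempty B := ⟨0, mem_closedBall_self K.coe_nonneg⟩
  have inner_le : ∀ x, ∀ y : B, ⟪y.1, x⟫ ≤ g y + f x := fun x y => by
    rw [real_inner_comm, add_comm]
    exact hle x y y.2
  have dom_eq : fenchelDomain Subtype.val (fun y : B => g y) = univ :=
    eq_univ_of_forall fun x => mem_fenchelDomain_of_inner_le (inner_le x)
  have F_convex : ConvexOn ℝ univ F := dom_eq ▸ convexOn_fenchelConj
  have F_lipschitz : LipschitzWith K F := lipschitzOnWith_univ.1 <|
    dom_eq ▸ lipschitzOnWith_fenchelConj fun y : B => mem_closedBall_zero_iff.1 y.2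
  have F_le : ∀ x, F x ≤ f x := fun x => fenchelConj_le_of_inner_le (inner_le x)
  have ρ_ball : ∀ᵐ y ∂ρ, y ∈ B := hρ
  have μ_le : OTcost μ ρ ≤ ∫ x, F x ∂μ + ∫ y, g y ∂ρ :=
    OTcost_le_of_inner_le hμ hρ (integrable_of_lipschitzWith hμ F_lipschitz) hg <|
      ρ_ball.mono fun y hy x => by
        rw [real_inner_comm, add_comm]
        exact inner_le_add_fenchelConj (dom_eq ▸ mem_univ x) (⟨y, hy⟩ : B)
  have integral_F_le : ∫ x, F x ∂ν ≤ ∫ x, f x ∂ν :=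
    integral_mono (integrable_of_lipschitzWith hν F_lipschitz) hf F_le
  exact ⟨F, F_convex, F_lipschitz, by linarith⟩

end ConvexLipschitz

section Order

lemma real_sSup_lowerBounds_eq_sInf (s : Set ℝ) : sSup (lowerBounds s) = sInf s := by
  rcases s.eq_empty_or_nonempty with rfl | hs
  · rw [lowerBounds_empty, Real.sSup_univ, Real.sInf_empty]
  by_cases hbdd : BddBelow s
  · exact csSup_lowerBounds_eq_csInf hbdd hs
  · rw [not_nonempty_iff_eq_empty.1 hbdd, Real.sSup_empty, Real.sInf_of_not_bddBelow hbdd]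

lemma lowerBounds_subset_of_forall_exists_le_add {s t : Set ℝ}
    (h : ∀ a ∈ s, ∀ ε > 0, ∃ b ∈ t, b ≤ a + ε) : lowerBounds t ⊆ lowerBounds s :=
  fun _ hc a ha => le_of_forall_pos_le_add fun ε hε =>
    let ⟨_, hb, hle⟩ := h a ha ε hε
    (hc hb).trans hle

lemma sInf_eq_sInf_of_forall_exists_le_add {s t : Set ℝ}
    (hst : ∀ a ∈ s, ∀ ε > 0, ∃ b ∈ t, b ≤ a + ε) (hts : ∀ b ∈ t, ∀ ε > 0, ∃ a ∈ s, a ≤ b + ε) :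
    sInf s = sInf t := by
  rw [← real_sSup_lowerBounds_eq_sInf, ← real_sSup_lowerBounds_eq_sInf,
    (lowerBounds_subset_of_forall_exists_le_add hts).antisymm
      (lowerBounds_subset_of_forall_exists_le_add hst)]

end Order

end Duality

theorem stmt0 (d : ℕ) (hd : 1 ≤ d)
    (μ ν : Measure (EuclideanSpace ℝ (Fin d)))
    [IsProbabilityMeasure μ] [IsProbabilityMeasure ν]
    (hμ : Integrable (fun x => ‖x‖) μ) (hν : Integrable (fun y => ‖y‖) ν) :
    sInf {r : ℝ | ∃ f : EuclideanSpace ℝ (Fin d) → ℝ,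
        ConvexOn ℝ Set.univ f ∧ LipschitzWith 1 f ∧
        r = ∫ x, f x ∂ν - ∫ x, f x ∂μ}
      = sInf {r : ℝ | ∃ ρ : Measure (EuclideanSpace ℝ (Fin d)),
        IsProbabilityMeasure ρ ∧ ρ (closedBall (0 : EuclideanSpace ℝ (Fin d)) 1)ᶜ = 0 ∧
        r = OTcost ν ρ - OTcost μ ρ} := by
  refine sInf_eq_sInf_of_forall_exists_le_add ?_ ?_
  · rintro _ ⟨f, f_convex, f_lipschitz, rfl⟩ ε hε
    obtain ⟨ρ, ρ_prob, ρ_ball, hle⟩ :=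
      exists_OTcost_sub_le_integral_sub hμ hν f_convex f_lipschitz hε
    exact ⟨_, ⟨ρ, ρ_prob, ρ_ball, rfl⟩, hle⟩
  · rintro _ ⟨ρ, ρ_prob, ρ_ball, rfl⟩ ε hε
    obtain ⟨f, f_convex, f_lipschitz, hle⟩ :=
      exists_integral_sub_le_OTcost_sub (K := 1) hμ hν ρ_ball hε
    exact ⟨_, ⟨f, f_convex, f_lipschitz, rfl⟩, hle⟩
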